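/- Let n ∈ ℕ and let a, b be indices with 0 ≤ a < b ≤ 4^n. If the level of the pair (a, b) in K_n equals i, then the polygonal path with vertices K_n a, K_n (a+1), …, K_n b admits a Fréchet matching to the segment from K_n a to K_n b within Real.sqrt 3 · 3^{1−i}. -/

import Mathlib

/-- The uniform piecewise-linear parametrization of the polygonal path `p`:
on `[k/m, (k+1)/m]` it interpolates linearly from `p k` to `p (k+1)`. -/
noncomputable def polyParam {E : Type*} [NormedAddCommGroup E] [NormedSpace ℝ E]
    {m : ℕ} (p : Fin (m + 1) → E) (τ : ℝ) : E :=
  let k : ℕ := min ⌊τ * m⌋₊ (m - 1)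
  p ⟨min k m, Nat.lt_succ_of_le (min_le_right _ _)⟩ +
    (τ * m - (k : ℝ)) •
      (p ⟨min (k + 1) m, Nat.lt_succ_of_le (min_le_right _ _)⟩ -
        p ⟨min k m, Nat.lt_succ_of_le (min_le_right _ _)⟩)

/-- The polygonal path `p` admits a Fréchet matching to the segment from `u` to `v`
within `ε`: there are continuous monotone reparametrizations `φ, ψ` of `[0,1]`, fixing the
endpoints, such that at every time `τ` the point `γ_p (φ τ)` of the path and the point
`u + ψ τ • (v − u)` of the segment are at distance at most `ε`. -/
def FrechetMatchingWithin {E : Type*} [NormedAddCommGroup E] [NormedSpace ℝ E]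
    {m : ℕ} (p : Fin (m + 1) → E) (u v : E) (ε : ℝ) : Prop :=
  ∃ φ ψ : ℝ → ℝ,
    ContinuousOn φ (Set.Icc 0 1) ∧ ContinuousOn ψ (Set.Icc 0 1) ∧
    MonotoneOn φ (Set.Icc 0 1) ∧ MonotoneOn ψ (Set.Icc 0 1) ∧
    Set.MapsTo φ (Set.Icc 0 1) (Set.Icc 0 1) ∧ Set.MapsTo ψ (Set.Icc 0 1) (Set.Icc 0 1) ∧
    φ 0 = 0 ∧ ψ 0 = 0 ∧ φ 1 = 1 ∧ ψ 1 = 1 ∧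
    ∀ τ ∈ Set.Icc (0 : ℝ) 1, dist (polyParam p (φ τ)) (u + ψ τ • (v - u)) ≤ ε


/-- The point of the Euclidean plane with the given coordinates. -/
noncomputable def pt (x y : ℝ) : EuclideanSpace ℝ (Fin 2) :=
  (WithLp.equiv 2 (Fin 2 → ℝ)).symm ![x, y]

/-- Rotation by 90 degrees counterclockwise: `ρ(x, y) = (−y, x)`. -/
noncomputable def rot90 (x : EuclideanSpace ℝ (Fin 2)) : EuclideanSpace ℝ (Fin 2) :=
  pt (-x 1) (x 0)

/-- The vertices of the Koch polyline: `koch n k` is the `k`-th vertex (for `0 ≤ k ≤ 4^n`)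
of the `n`-th stage `K_n` of the Koch curve construction, starting from the unit segment
from `(0,0)` to `(1,0)`.  Each edge `ab` of `K_n` is replaced in `K_{n+1}` by the four edges
through `a`, `a + (b−a)/3`, `(a+b)/2 + (√3/6)·ρ(b−a)`, `a + 2(b−a)/3`, `b`. -/
noncomputable def koch : ℕ → ℕ → EuclideanSpace ℝ (Fin 2)
  | 0, k => if k = 0 then pt 0 0 else pt 1 0
  | n + 1, j =>
      let a := koch n (j / 4)
      let b := koch n (j / 4 + 1)
      if j % 4 = 0 then a
      else if j % 4 = 1 then a + (3 : ℝ)⁻¹ • (b - a)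
      else if j % 4 = 2 then (2 : ℝ)⁻¹ • (a + b) + (Real.sqrt 3 / 6) • rot90 (b - a)
      else a + (2 / 3 : ℝ) • (b - a)

/-- The level of the index `k` (with `0 ≤ k ≤ 4^n`) in `K_n`: the least `i ≤ n` such that
`4^(n−i)` divides `k`, i.e. such that `koch n k` is already a vertex of `K_i`. -/
noncomputable def kochLevel (n k : ℕ) : ℕ := sInf {i | i ≤ n ∧ 4 ^ (n - i) ∣ k}

/-- The level of the pair of indices `(a, b)`: the least `i` such that at least two indices
`k` with `a ≤ k ≤ b` have level at most `i`. -/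
noncomputable def kochPairLevel (n a b : ℕ) : ℕ :=
  sInf {i | ∃ k₁ k₂ : ℕ, a ≤ k₁ ∧ k₁ < k₂ ∧ k₂ ≤ b ∧ kochLevel n k₁ ≤ i ∧ kochLevel n k₂ ≤ i}

/-! Cut the path into at most two consecutive blocks, each of which lies over a single edge of a
coarser polyline `K_k`. A block stays in the isosceles triangle erected on its edge, whose
diameter is the edge length `3 ^ (-k)`, and the triangles on consecutive edges share a vertex.
Hence the distances from a vertex of the path to its two endpoints add up to at most
`3 * 3 ^ (-k)`, and the whole path lies in the closed ball of radius `3 / 2 * 3 ^ (-k)` about the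
midpoint of the segment. The matching walks along the segment to its midpoint, waits there while
the path is traversed, then walks on. -/

open AffineMap Metric

/-- The real number `x` truncated to the interval `[0, 1]`; it serves to build piecewise affine
reparametrizations. -/
noncomputable def clamp (x : ℝ) : ℝ := Set.projIcc (0 : ℝ) 1 zero_le_one x

lemma clamp_mem (x : ℝ) : clamp x ∈ Set.Icc (0 : ℝ) 1 := Subtype.prop _

lemma clamp_of_nonpos {x : ℝ} (hx : x ≤ 0) : clamp x = 0 :=
  congrArg Subtype.val (Set.projIcc_of_le_left _ hx)

lemma clamp_of_one_le {x : ℝ} (hx : 1 ≤ x) : clamp x = 1 :=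
  congrArg Subtype.val (Set.projIcc_of_right_le _ hx)

lemma clamp_mono : Monotone clamp := Set.monotone_projIcc _

@[fun_prop]
lemma continuous_clamp : Continuous clamp := continuous_subtype_val.comp continuous_projIcc

section LineMap

variable {V P : Type*} [SeminormedAddCommGroup V] [PseudoMetricSpace P] [NormedSpace ℝ V]
  [NormedAddTorsor V P] {u v : P} {s t : ℝ}

lemma dist_left_lineMap_le_of_le (ht : 0 ≤ t) (hts : t ≤ s) :
    dist u (lineMap u v t) ≤ dist u (lineMap u v s) := by
  rw [dist_left_lineMap, dist_left_lineMap, Real.norm_of_nonneg ht,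
    Real.norm_of_nonneg (ht.trans hts)]
  gcongr

lemma dist_right_lineMap_le_of_le (hst : s ≤ t) (ht : t ≤ 1) :
    dist v (lineMap u v t) ≤ dist v (lineMap u v s) := by
  rw [dist_right_lineMap, dist_right_lineMap, Real.norm_of_nonneg (sub_nonneg.2 ht),
    Real.norm_of_nonneg (sub_nonneg.2 (hst.trans ht))]
  gcongr

end LineMap

section Frechet

variable {E : Type*} [NormedAddCommGroup E] [NormedSpace ℝ E] {m : ℕ} {p : Fin (m + 1) → E}

lemma FrechetMatchingWithin.mono {u v : E} {ε δ : ℝ} (h : FrechetMatchingWithin p u v ε)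
    (hεδ : ε ≤ δ) : FrechetMatchingWithin p u v δ := by
  obtain ⟨φ, ψ, hφ, hψ, hφm, hψm, hφI, hψI, hφ₀, hψ₀, hφ₁, hψ₁, hd⟩ := h
  exact ⟨φ, ψ, hφ, hψ, hφm, hψm, hφI, hψI, hφ₀, hψ₀, hφ₁, hψ₁,
    fun τ hτ => (hd τ hτ).trans hεδ⟩

lemma polyParam_zero (p : Fin (m + 1) → E) : polyParam p 0 = p 0 := by
  simp [polyParam]

lemma polyParam_one (p : Fin (m + 1) → E) : polyParam p 1 = p (Fin.last m) := by
  cases m with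
  | zero => simp [polyParam]
  | succ m =>
    have hfloor : ⌊(m : ℝ) + 1⌋₊ = m + 1 := mod_cast Nat.floor_natCast (m + 1)
    simp [polyParam, hfloor, Fin.last]

lemma polyParam_mem {s : Set E} (hs : Convex ℝ s) (hp : ∀ j, p j ∈ s) {t : ℝ}
    (ht : t ∈ Set.Icc (0 : ℝ) 1) : polyParam p t ∈ s := by
  refine hs.add_smul_sub_mem (hp _) (hp _) ⟨?_, ?_⟩
  · have hfloor : (⌊t * m⌋₊ : ℝ) ≤ t * m := Nat.floor_le (mul_nonneg ht.1 m.cast_nonneg)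
    have hmin : ((min ⌊t * m⌋₊ (m - 1) : ℕ) : ℝ) ≤ ⌊t * m⌋₊ := mod_cast min_le_left _ _
    linarith
  · rcases le_total ⌊t * m⌋₊ (m - 1) with h | h
    · rw [min_eq_left h]
      linarith [Nat.lt_floor_add_one (t * m)]
    · have htm : t * m ≤ m := mul_le_of_le_one_left m.cast_nonneg ht.2
      have hpred : (m : ℝ) ≤ (m - 1 : ℕ) + 1 := mod_cast le_tsub_add
      rw [min_eq_right h]
      linarith

lemma frechetMatchingWithin_of_mem_closedBall_lineMap {s ε : ℝ} (hs : s ∈ Set.Icc (0 : ℝ) 1)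
    (hp : ∀ j, p j ∈ closedBall (lineMap (p 0) (p (Fin.last m)) s) ε) :
    FrechetMatchingWithin p (p 0) (p (Fin.last m)) ε := by
  have hs₁ : 0 ≤ 1 - s := sub_nonneg.2 hs.2
  refine ⟨fun t => clamp (3 * t - 1), fun t => s * clamp (3 * t) + (1 - s) * clamp (3 * t - 2),
    by fun_prop, by fun_prop, fun x _ y _ hxy => clamp_mono (by linarith), ?_,
    fun t _ => clamp_mem _, ?_, by norm_num [clamp_of_nonpos], by norm_num [clamp_of_nonpos],
    by norm_num [clamp_of_one_le], by norm_num [clamp_of_one_le], fun t _ => ?_⟩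
  · intro x _ y _ hxy
    exact add_le_add (mul_le_mul_of_nonneg_left (clamp_mono (by linarith)) hs.1)
      (mul_le_mul_of_nonneg_left (clamp_mono (by linarith)) hs₁)
  · exact fun t _ => convex_Icc (0 : ℝ) 1 (clamp_mem _) (clamp_mem _) hs.1 hs₁ (by ring)
  dsimp only
  rw [add_comm (p 0), ← lineMap_apply_module']
  rcases le_total (3 * t) 1 with ht₁ | ht₁
  · rw [clamp_of_nonpos (by linarith : 3 * t - 1 ≤ 0),
      clamp_of_nonpos (by linarith : 3 * t - 2 ≤ 0), mul_zero, add_zero, polyParam_zero]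
    exact (dist_left_lineMap_le_of_le (mul_nonneg hs.1 (clamp_mem _).1)
      (mul_le_of_le_one_right hs.1 (clamp_mem _).2)).trans (hp 0)
  rcases le_total (3 * t) 2 with ht₂ | ht₂
  · rw [clamp_of_one_le ht₁, clamp_of_nonpos (by linarith : 3 * t - 2 ≤ 0), mul_one, mul_zero,
      add_zero]
    exact polyParam_mem (convex_closedBall _ _) hp (clamp_mem _)
  · rw [clamp_of_one_le ht₁, clamp_of_one_le (by linarith : 1 ≤ 3 * t - 1), mul_one,
      polyParam_one]
    refine (dist_right_lineMap_le_of_le ?_ ?_).trans (hp (Fin.last m))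
    · exact le_add_of_nonneg_right (mul_nonneg hs₁ (clamp_mem _).1)
    · linarith [mul_le_of_le_one_right hs₁ (clamp_mem (3 * t - 2)).2]

lemma frechetMatchingWithin_of_dist_add_dist_le {ε : ℝ}
    (hp : ∀ j, dist (p j) (p 0) + dist (p j) (p (Fin.last m)) ≤ 2 * ε) :
    FrechetMatchingWithin p (p 0) (p (Fin.last m)) ε := by
  refine frechetMatchingWithin_of_mem_closedBall_lineMap (s := ⅟2) (by norm_num) fun j => ?_
  have h := dist_midpoint_midpoint_le (p j) (p j) (p 0) (p (Fin.last m))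
  rw [midpoint_self] at h
  exact mem_closedBall.2 (h.trans (by linarith [hp j]))

end Frechet

lemma dist_add_dist_le_three_mul {X : Type*} [PseudoMetricSpace X] {S T : Set X} {r : ℝ}
    {c x y z : X} (hS : ∀ p ∈ S, ∀ q ∈ S, dist p q ≤ r) (hT : ∀ p ∈ T, ∀ q ∈ T, dist p q ≤ r)
    (hcS : c ∈ S) (hcT : c ∈ T) (hx : x ∈ S) (hy : y ∈ T) (hz : z ∈ S ∪ T) :
    dist z x + dist z y ≤ 3 * r := by
  rcases hz with hz | hz
  · linarith [hS z hz x hx, hS z hz c hcS, hT c hcT y hy, dist_triangle z c y]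
  · linarith [hT z hz y hy, hT z hz c hcT, hS c hcS x hx, dist_triangle z c x]

lemma rot90_apply_zero (d : EuclideanSpace ℝ (Fin 2)) : rot90 d 0 = -d 1 := rfl

lemma rot90_apply_one (d : EuclideanSpace ℝ (Fin 2)) : rot90 d 1 = d 0 := rfl

lemma lineMap_apply_coord {ι : Type*} (a b : EuclideanSpace ℝ ι) (t : ℝ) (i : ι) :
    lineMap a b t i = a i + t * (b i - a i) := by
  simp [lineMap_apply_module', add_comm]

lemma norm_sq_smul_add_smul_rot90 (d : EuclideanSpace ℝ (Fin 2)) (x y : ℝ) :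
    ‖x • d + y • rot90 d‖ ^ 2 = (x ^ 2 + y ^ 2) * ‖d‖ ^ 2 := by
  simp only [EuclideanSpace.real_norm_sq_eq, Fin.sum_univ_two, PiLp.add_apply, PiLp.smul_apply,
    smul_eq_mul, rot90_apply_zero, rot90_apply_one]
  ring

lemma norm_smul_add_smul_rot90_le (d : EuclideanSpace ℝ (Fin 2)) {x y : ℝ}
    (hxy : x ^ 2 + y ^ 2 ≤ 1) : ‖x • d + y • rot90 d‖ ≤ ‖d‖ := by
  refine le_of_sq_le_sq ?_ (norm_nonneg d)
  rw [norm_sq_smul_add_smul_rot90]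
  exact mul_le_of_le_one_left (sq_nonneg _) hxy

section KochTriangle

variable {a b c d : EuclideanSpace ℝ (Fin 2)}

/-- The apex of the isosceles triangle which one step of the Koch construction inscribes over the
edge from `a` to `b`, on its left side; its base angles are 30 degrees. -/
noncomputable def kochApex (a b : EuclideanSpace ℝ (Fin 2)) : EuclideanSpace ℝ (Fin 2) :=
  (2 : ℝ)⁻¹ • (a + b) + (Real.sqrt 3 / 6) • rot90 (b - a)

/-- The filled triangle with base from `a` to `b` and apex `kochApex a b`. It contains everything
that the Koch construction ever puts in place of the edge from `a` to `b`. -/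
def kochTriangle (a b : EuclideanSpace ℝ (Fin 2)) : Set (EuclideanSpace ℝ (Fin 2)) :=
  convexHull ℝ {a, b, kochApex a b}

/-- `IsKochChild a b c d` says that the edge from `c` to `d` is one of the four edges which replace
the edge from `a` to `b` in one step of the Koch construction. -/
inductive IsKochChild (a b : EuclideanSpace ℝ (Fin 2)) :
    EuclideanSpace ℝ (Fin 2) → EuclideanSpace ℝ (Fin 2) → Prop
  | first : IsKochChild a b a (lineMap a b (1 / 3 : ℝ))
  | second : IsKochChild a b (lineMap a b (1 / 3 : ℝ)) (kochApex a b)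
  | third : IsKochChild a b (kochApex a b) (lineMap a b (2 / 3 : ℝ))
  | fourth : IsKochChild a b (lineMap a b (2 / 3 : ℝ)) b

lemma left_mem_kochTriangle (a b : EuclideanSpace ℝ (Fin 2)) : a ∈ kochTriangle a b :=
  subset_convexHull ℝ _ (by simp)

lemma right_mem_kochTriangle (a b : EuclideanSpace ℝ (Fin 2)) : b ∈ kochTriangle a b :=
  subset_convexHull ℝ _ (by simp)

lemma kochApex_mem_kochTriangle (a b : EuclideanSpace ℝ (Fin 2)) :
    kochApex a b ∈ kochTriangle a b :=
  subset_convexHull ℝ _ (by simp)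

lemma kochApex_apply_zero (a b : EuclideanSpace ℝ (Fin 2)) :
    kochApex a b 0 = (a 0 + b 0) / 2 + Real.sqrt 3 / 6 * (a 1 - b 1) := by
  simp only [kochApex, PiLp.add_apply, PiLp.sub_apply, PiLp.smul_apply, smul_eq_mul,
    rot90_apply_zero]
  ring

lemma kochApex_apply_one (a b : EuclideanSpace ℝ (Fin 2)) :
    kochApex a b 1 = (a 1 + b 1) / 2 + Real.sqrt 3 / 6 * (b 0 - a 0) := by
  simp only [kochApex, PiLp.add_apply, PiLp.sub_apply, PiLp.smul_apply, smul_eq_mul,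
    rot90_apply_one]
  ring

lemma kochApex_lineMap_one_third (a b : EuclideanSpace ℝ (Fin 2)) :
    kochApex a (lineMap a b (1 / 3 : ℝ)) = lineMap a (kochApex a b) (1 / 3 : ℝ) := by
  refine PiLp.ext (Fin.forall_fin_two.2 ⟨?_, ?_⟩)
  · simp only [kochApex_apply_zero, lineMap_apply_coord]
    ring
  · simp only [kochApex_apply_one, lineMap_apply_coord]
    ring

lemma kochApex_lineMap_one_third_kochApex (a b : EuclideanSpace ℝ (Fin 2)) :
    kochApex (lineMap a b (1 / 3 : ℝ)) (kochApex a b) = lineMap a (kochApex a b) (2 / 3 : ℝ) := by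
  have hsqrt : Real.sqrt 3 ^ 2 = 3 := Real.sq_sqrt (by norm_num)
  refine PiLp.ext (Fin.forall_fin_two.2 ⟨?_, ?_⟩)
  · simp only [kochApex_apply_zero, kochApex_apply_one, lineMap_apply_coord]
    linear_combination (a 0 - b 0) / 36 * hsqrt
  · simp only [kochApex_apply_zero, kochApex_apply_one, lineMap_apply_coord]
    linear_combination (a 1 - b 1) / 36 * hsqrt

lemma kochApex_kochApex_lineMap_two_thirds (a b : EuclideanSpace ℝ (Fin 2)) :
    kochApex (kochApex a b) (lineMap a b (2 / 3 : ℝ)) = lineMap b (kochApex a b) (2 / 3 : ℝ) := by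
  have hsqrt : Real.sqrt 3 ^ 2 = 3 := Real.sq_sqrt (by norm_num)
  refine PiLp.ext (Fin.forall_fin_two.2 ⟨?_, ?_⟩)
  · simp only [kochApex_apply_zero, kochApex_apply_one, lineMap_apply_coord]
    linear_combination (b 0 - a 0) / 36 * hsqrt
  · simp only [kochApex_apply_zero, kochApex_apply_one, lineMap_apply_coord]
    linear_combination (b 1 - a 1) / 36 * hsqrt

lemma kochApex_lineMap_two_thirds (a b : EuclideanSpace ℝ (Fin 2)) :
    kochApex (lineMap a b (2 / 3 : ℝ)) b = lineMap b (kochApex a b) (1 / 3 : ℝ) := by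
  refine PiLp.ext (Fin.forall_fin_two.2 ⟨?_, ?_⟩)
  · simp only [kochApex_apply_zero, lineMap_apply_coord]
    ring
  · simp only [kochApex_apply_one, lineMap_apply_coord]
    ring

lemma lineMap_mem_kochTriangle {u v : EuclideanSpace ℝ (Fin 2)} {t : ℝ}
    (hu : u ∈ kochTriangle a b) (hv : v ∈ kochTriangle a b) (ht : t ∈ Set.Icc (0 : ℝ) 1) :
    lineMap u v t ∈ kochTriangle a b :=
  (convex_convexHull ℝ _).lineMap_mem hu hv ht

lemma kochTriangle_subset_of_mem (hc : c ∈ kochTriangle a b) (hd : d ∈ kochTriangle a b)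
    (hcd : kochApex c d ∈ kochTriangle a b) : kochTriangle c d ⊆ kochTriangle a b :=
  convexHull_min (by simp [Set.insert_subset_iff, hc, hd, hcd]) (convex_convexHull ℝ _)

lemma IsKochChild.kochTriangle_subset (h : IsKochChild a b c d) :
    kochTriangle c d ⊆ kochTriangle a b := by
  have ha := left_mem_kochTriangle a b
  have hb := right_mem_kochTriangle a b
  have hp := kochApex_mem_kochTriangle a b
  have h₁ : (1 / 3 : ℝ) ∈ Set.Icc (0 : ℝ) 1 := by norm_num
  have h₂ : (2 / 3 : ℝ) ∈ Set.Icc (0 : ℝ) 1 := by norm_num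
  have hab₁ := lineMap_mem_kochTriangle ha hb h₁
  have hab₂ := lineMap_mem_kochTriangle ha hb h₂
  cases h with
  | first =>
    exact kochTriangle_subset_of_mem ha hab₁
      (kochApex_lineMap_one_third a b ▸ lineMap_mem_kochTriangle ha hp h₁)
  | second =>
    exact kochTriangle_subset_of_mem hab₁ hp
      (kochApex_lineMap_one_third_kochApex a b ▸ lineMap_mem_kochTriangle ha hp h₂)
  | third =>
    exact kochTriangle_subset_of_mem hp hab₂
      (kochApex_kochApex_lineMap_two_thirds a b ▸ lineMap_mem_kochTriangle hb hp h₂)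
  | fourth =>
    exact kochTriangle_subset_of_mem hab₂ hb
      (kochApex_lineMap_two_thirds a b ▸ lineMap_mem_kochTriangle hb hp h₁)

lemma IsKochChild.dist_eq (h : IsKochChild a b c d) : dist c d = 1 / 3 * dist a b := by
  have hsqrt : Real.sqrt 3 ^ 2 = 3 := Real.sq_sqrt (by norm_num)
  obtain ⟨x, y, hxy, hdc⟩ : ∃ x y : ℝ, x ^ 2 + y ^ 2 = (1 / 3) ^ 2 ∧
      d - c = x • (b - a) + y • rot90 (b - a) := by
    cases h with
    | first => exact ⟨1 / 3, 0, by norm_num, by rw [lineMap_apply_module']; module⟩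
    | second =>
      refine ⟨1 / 6, Real.sqrt 3 / 6, by linear_combination hsqrt / 36, ?_⟩
      rw [lineMap_apply_module', kochApex]; module
    | third =>
      refine ⟨1 / 6, -(Real.sqrt 3 / 6), by linear_combination hsqrt / 36, ?_⟩
      rw [lineMap_apply_module', kochApex]; module
    | fourth => exact ⟨1 / 3, 0, by norm_num, by rw [lineMap_apply_module']; module⟩
  rw [dist_comm c, dist_comm a, dist_eq_norm, dist_eq_norm,
    ← sq_eq_sq₀ (norm_nonneg _) (by positivity), hdc, norm_sq_smul_add_smul_rot90, hxy, mul_pow]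

lemma dist_kochApex_left_le (a b : EuclideanSpace ℝ (Fin 2)) :
    dist (kochApex a b) a ≤ dist a b := by
  have hsub : kochApex a b - a = (1 / 2 : ℝ) • (b - a) + (Real.sqrt 3 / 6) • rot90 (b - a) := by
    rw [kochApex]
    module
  rw [dist_comm a, dist_eq_norm, dist_eq_norm, hsub]
  exact norm_smul_add_smul_rot90_le _ (by norm_num [div_pow])

lemma dist_kochApex_right_le (a b : EuclideanSpace ℝ (Fin 2)) :
    dist (kochApex a b) b ≤ dist a b := by
  have hsub : kochApex a b - b = (-1 / 2 : ℝ) • (b - a) + (Real.sqrt 3 / 6) • rot90 (b - a) := by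
    rw [kochApex]
    module
  rw [dist_comm a, dist_eq_norm, dist_eq_norm, hsub]
  exact norm_smul_add_smul_rot90_le _ (by norm_num [div_pow])

lemma dist_le_of_mem_kochTriangle {z w : EuclideanSpace ℝ (Fin 2)}
    (hz : z ∈ kochTriangle a b) (hw : w ∈ kochTriangle a b) : dist z w ≤ dist a b := by
  obtain ⟨p, hp, q, hq, hpq⟩ := convexHull_exists_dist_ge2 hz hw
  have hpa := dist_kochApex_left_le a b
  have hpb := dist_kochApex_right_le a b
  refine hpq.trans ?_
  rcases hp with rfl | rfl | rfl <;> rcases hq with rfl | rfl | rfl <;>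
    simp_all [dist_comm]

end KochTriangle

lemma koch_succ_four_mul (n q : ℕ) : koch (n + 1) (4 * q) = koch n q := by
  simp [koch]

lemma koch_succ_four_mul_add_one (n q : ℕ) :
    koch (n + 1) (4 * q + 1) = lineMap (koch n q) (koch n (q + 1)) (1 / 3 : ℝ) := by
  have hdiv : (4 * q + 1) / 4 = q := by omega
  simp [koch, hdiv, lineMap_apply_module', add_comm (koch n q)]

lemma koch_succ_four_mul_add_two (n q : ℕ) :
    koch (n + 1) (4 * q + 2) = kochApex (koch n q) (koch n (q + 1)) := by
  have hdiv : (4 * q + 2) / 4 = q := by omega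
  simp [koch, hdiv, kochApex]

lemma koch_succ_four_mul_add_three (n q : ℕ) :
    koch (n + 1) (4 * q + 3) = lineMap (koch n q) (koch n (q + 1)) (2 / 3 : ℝ) := by
  have hdiv : (4 * q + 3) / 4 = q := by omega
  simp [koch, hdiv, lineMap_apply_module', add_comm (koch n q)]

lemma isKochChild_koch (n j : ℕ) :
    IsKochChild (koch n (j / 4)) (koch n (j / 4 + 1)) (koch (n + 1) j) (koch (n + 1) (j + 1)) := by
  generalize hq : j / 4 = q
  obtain rfl | rfl | rfl | rfl : j = 4 * q ∨ j = 4 * q + 1 ∨ j = 4 * q + 2 ∨ j = 4 * q + 3 := by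
    omega
  · rw [koch_succ_four_mul, koch_succ_four_mul_add_one]
    exact .first
  · rw [koch_succ_four_mul_add_one, koch_succ_four_mul_add_two]
    exact .second
  · rw [koch_succ_four_mul_add_two, koch_succ_four_mul_add_three]
    exact .third
  · rw [koch_succ_four_mul_add_three, show 4 * q + 3 + 1 = 4 * (q + 1) by ring,
      koch_succ_four_mul]
    exact .fourth

lemma koch_add_mul_four_pow (n m q : ℕ) : koch (n + m) (q * 4 ^ m) = koch n q := by
  induction m with
  | zero => simp
  | succ m ih => rw [← add_assoc, pow_succ', mul_left_comm, koch_succ_four_mul, ih]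

lemma dist_koch_succ_le (n j : ℕ) : dist (koch n j) (koch n (j + 1)) ≤ (1 / 3 : ℝ) ^ n := by
  induction n generalizing j with
  | zero => cases j <;> simp [koch, pt, EuclideanSpace.dist_eq]
  | succ n ih =>
    rw [(isKochChild_koch n j).dist_eq, pow_succ']
    exact mul_le_mul_of_nonneg_left (ih _) (by norm_num)

lemma kochTriangle_koch_subset (n m j : ℕ) :
    kochTriangle (koch (n + m) j) (koch (n + m) (j + 1)) ⊆
      kochTriangle (koch n (j / 4 ^ m)) (koch n (j / 4 ^ m + 1)) := by
  induction m generalizing j with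
  | zero => simp
  | succ m ih =>
    rw [pow_succ', ← Nat.div_div_eq_div_mul]
    exact (isKochChild_koch (n + m) j).kochTriangle_subset.trans (ih (j / 4))

lemma koch_mem_kochTriangle {n m q k : ℕ} (hqk : q * 4 ^ m ≤ k) (hkq : k ≤ (q + 1) * 4 ^ m) :
    koch (n + m) k ∈ kochTriangle (koch n q) (koch n (q + 1)) := by
  rcases hkq.lt_or_eq with hlt | rfl
  · rw [← Nat.div_eq_of_lt_le hqk hlt]
    exact kochTriangle_koch_subset n m k (left_mem_kochTriangle _ _)
  · rw [koch_add_mul_four_pow]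
    exact right_mem_kochTriangle _ _

lemma dist_koch_add_dist_koch_le {n m a b j : ℕ} (haj : a ≤ j) (hjb : j ≤ b)
    (hb : b ≤ (a / 4 ^ m + 2) * 4 ^ m) :
    dist (koch (n + m) j) (koch (n + m) a) + dist (koch (n + m) j) (koch (n + m) b) ≤
      3 * (1 / 3 : ℝ) ^ n := by
  have hqa : a / 4 ^ m * 4 ^ m ≤ a := Nat.div_mul_le_self _ _
  have haq : a ≤ (a / 4 ^ m + 1) * 4 ^ m := by
    rw [add_one_mul]
    exact (Nat.lt_div_mul_add (by positivity)).le
  generalize a / 4 ^ m = q at *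
  let T (q : ℕ) := kochTriangle (koch n q) (koch n (q + 1))
  have diam_T (q : ℕ) : ∀ z ∈ T q, ∀ w ∈ T q, dist z w ≤ (1 / 3 : ℝ) ^ n := fun z hz w hw =>
    (dist_le_of_mem_kochTriangle hz hw).trans (dist_koch_succ_le n q)
  have ha : koch (n + m) a ∈ T q := koch_mem_kochTriangle hqa haq
  rcases le_total b ((q + 1) * 4 ^ m) with hbq | hqb
  · have mem_T {k : ℕ} (hak : a ≤ k) (hkb : k ≤ b) : koch (n + m) k ∈ T q :=
      koch_mem_kochTriangle (hqa.trans hak) (hkb.trans hbq)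
    exact dist_add_dist_le_three_mul (diam_T q) (diam_T q) ha ha ha
      (mem_T (haj.trans hjb) le_rfl) (.inl (mem_T haj hjb))
  · have hj : koch (n + m) j ∈ T q ∪ T (q + 1) :=
      (le_total j ((q + 1) * 4 ^ m)).imp (koch_mem_kochTriangle (hqa.trans haj))
        (fun hqj => koch_mem_kochTriangle hqj (hjb.trans hb))
    exact dist_add_dist_le_three_mul (diam_T q) (diam_T (q + 1)) (right_mem_kochTriangle _ _)
      (left_mem_kochTriangle _ _) ha (koch_mem_kochTriangle hqb hb) hj

lemma frechetMatchingWithin_koch {n m a b : ℕ} (hab : a ≤ b)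
    (hb : b ≤ (a / 4 ^ m + 2) * 4 ^ m) :
    FrechetMatchingWithin (m := b - a) (fun j => koch (n + m) (a + j)) (koch (n + m) a)
      (koch (n + m) b) (3 / 2 * (1 / 3 : ℝ) ^ n) := by
  have h := frechetMatchingWithin_of_dist_add_dist_le
    (p := fun j : Fin (b - a + 1) => koch (n + m) (a + j)) (ε := 3 / 2 * (1 / 3 : ℝ) ^ n)
  simp only [Fin.val_zero, add_zero, Fin.val_last, Nat.add_sub_cancel' hab] at h
  refine h fun j => ?_
  have hj : a + j ≤ b := by omega
  linarith [dist_koch_add_dist_koch_le (n := n) (a.le_add_right j) hj hb]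

section Level

variable {n a b i k : ℕ}

lemma kochLevel_le_of_dvd (hi : i ≤ n) (hk : 4 ^ (n - i) ∣ k) : kochLevel n k ≤ i :=
  Nat.sInf_le ⟨hi, hk⟩

lemma kochPairLevel_le (hab : a < b) : kochPairLevel n a b ≤ n :=
  Nat.sInf_le ⟨a, b, le_rfl, hab, le_rfl, kochLevel_le_of_dvd le_rfl (by simp),
    kochLevel_le_of_dvd le_rfl (by simp)⟩

lemma lt_of_lt_kochPairLevel (hin : i ≤ n) (hi : i < kochPairLevel n a b) :
    b < (a / 4 ^ (n - i) + 2) * 4 ^ (n - i) := by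
  contrapose! hi
  have hpos : 0 < 4 ^ (n - i) := by positivity
  refine Nat.sInf_le ⟨(a / 4 ^ (n - i) + 1) * 4 ^ (n - i), (a / 4 ^ (n - i) + 2) * 4 ^ (n - i),
    ?_, by gcongr; omega, hi, kochLevel_le_of_dvd hin (dvd_mul_left _ _),
    kochLevel_le_of_dvd hin (dvd_mul_left _ _)⟩
  rw [add_one_mul]
  exact (Nat.lt_div_mul_add hpos).le

end Level

theorem koch_frechet_upper_bound_general (n a b i : ℕ) (hab : a < b) (hb : b ≤ 4 ^ n)
    (hi : kochPairLevel n a b = i) :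
    FrechetMatchingWithin (m := b - a) (fun j => koch n (a + j)) (koch n a) (koch n b)
      (3 / 2 * (3 : ℝ) ^ ((1 : ℤ) - (i : ℤ))) := by
  have hle : kochPairLevel n a b ≤ n := kochPairLevel_le hab
  -- For `i = 0` the truncated `i - 1` is `0`, and the path refines the single edge of `K_0`.
  obtain ⟨m, rfl⟩ : ∃ m, n = (i - 1) + m := ⟨n - (i - 1), by omega⟩
  have hblocks : b ≤ (a / 4 ^ m + 2) * 4 ^ m := by
    rcases Nat.eq_zero_or_pos i with rfl | hpos
    · rw [Nat.zero_sub, zero_add] at hb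
      exact hb.trans (Nat.le_mul_of_pos_left _ (by positivity))
    · have hlt : i - 1 < kochPairLevel (i - 1 + m) a b := by omega
      have h := lt_of_lt_kochPairLevel (Nat.le_add_right (i - 1) m) hlt
      rw [Nat.add_sub_cancel_left] at h
      exact h.le
  refine (frechetMatchingWithin_koch hab.le hblocks).mono ?_
  rw [one_div, inv_pow, ← zpow_natCast, ← zpow_neg]
  gcongr
  · norm_num
  · omega

/-- If the pair of indices `(a, b)` has level `i` in `K_n`, then the polygonal path with
vertices `koch n a, …, koch n b` admits a Fréchet matching to the segment joining its
endpoints within `√3 · 3^(1−i)`. -/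
theorem koch_frechet_upper_bound (n a b i : ℕ) (hab : a < b) (hb : b ≤ 4 ^ n)
    (hi : kochPairLevel n a b = i) :
    FrechetMatchingWithin (m := b - a) (fun j => koch n (a + j)) (koch n a) (koch n b)
      (Real.sqrt 3 * (3 : ℝ) ^ ((1 : ℤ) - (i : ℤ))) := by
  refine (koch_frechet_upper_bound_general n a b i hab hb hi).mono ?_
  gcongr
  exact Real.le_sqrt_of_sq_le (by norm_num)
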